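/- Let D_Y > 0, suppose some channel in ℛ_Y(D_Y;Y) attains the minimal induced task distortion D_T^min = min 𝒟*_T(D_Y;Y), and suppose that for every channel k ∈ ℛ_Y(D_Y;Y) with E[d_T(h(Y), h(Ŷ))] = D_T^min there exist two points ŷ₁ ≠ ŷ₂ with nonzero marginal probabilities P(Ŷ = ŷ₁) > 0 and P(Ŷ = ŷ₂) > 0, identical task output h(ŷ₁) = h(ŷ₂), and at least one y with P(Y = y | Ŷ = ŷ₁) ≠ P(Y = y | Ŷ = ŷ₂). Then the minimal achievable rate of the supervised approach is strictly lower than that of distilling the intermediate layer directly: R_Y(D_T^min;T) < R_Y(D_Y;Y). -/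

import Mathlib

open scoped BigOperators

/-- Joint distribution P(a,b) = p(a)·k(a)(b) induced by a source `p` and a channel `k`,
as a real number. -/
noncomputable def jointP {A B : Type*} [Fintype A] [Fintype B] (p : PMF A) (k : A → PMF B)
    (a : A) (b : B) : ℝ :=
  (p a * k a b).toReal

/-- Marginal distribution of the second coordinate of the joint induced by `(p, k)`. -/
noncomputable def margSnd {A B : Type*} [Fintype A] [Fintype B] (p : PMF A) (k : A → PMF B)
    (b : B) : ℝ :=
  ∑ a, jointP p k a b

/-- Mutual information I(A;B) = ∑_{a,b} P(a,b)·log(P(a,b)/(P(a)·P(b))) of the joint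
induced by `(p, k)`; the convention 0·log 0 = 0 holds automatically in Lean. -/
noncomputable def mutualInfo {A B : Type*} [Fintype A] [Fintype B] (p : PMF A)
    (k : A → PMF B) : ℝ :=
  ∑ a, ∑ b, jointP p k a b * Real.log (jointP p k a b / ((p a).toReal * margSnd p k b))

/-- Expected distortion E[d(A,B)] under the joint induced by `(p, k)`. -/
noncomputable def expDist {A B : Type*} [Fintype A] [Fintype B] (p : PMF A) (k : A → PMF B)
    (d : A → B → ℝ) : ℝ :=
  ∑ a, ∑ b, jointP p k a b * d a b

/-- Rate-distortion function: infimum of mutual information over all channels `A → PMF B`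
meeting the expected-distortion constraint `≤ D`. -/
noncomputable def rate {A B : Type*} [Fintype A] [Fintype B] (p : PMF A) (d : A → B → ℝ)
    (D : ℝ) : ℝ :=
  sInf { r : ℝ | ∃ k : A → PMF B, expDist p k d ≤ D ∧ r = mutualInfo p k }

/-- Conditional probability P(A = a | B = b) under the joint induced by `(p, k)`. -/
noncomputable def condProb {A B : Type*} [Fintype A] [Fintype B] (p : PMF A) (k : A → PMF B)
    (a : A) (b : B) : ℝ :=
  jointP p k a b / margSnd p k b

section Merge

variable {A B : Type*} [Fintype A] [Fintype B]

theorem jointP_nonneg (p : PMF A) (k : A → PMF B) (a : A) (b : B) : 0 ≤ jointP p k a b :=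
  ENNReal.toReal_nonneg

theorem margSnd_nonneg (p : PMF A) (k : A → PMF B) (b : B) : 0 ≤ margSnd p k b :=
  Finset.sum_nonneg fun a _ => jointP_nonneg p k a b

theorem jointP_le_margSnd (p : PMF A) (k : A → PMF B) (a : A) (b : B) :
    jointP p k a b ≤ margSnd p k b :=
  Finset.single_le_sum (f := fun a => jointP p k a b) (fun a _ => jointP_nonneg p k a b)
    (Finset.mem_univ a)

theorem jointP_eq_zero_of_source {p : PMF A} (k : A → PMF B) {a : A} (b : B)
    (ha : (p a).toReal = 0) : jointP p k a b = 0 := by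
  simp [jointP, ENNReal.toReal_mul, ha]

theorem sum_toReal_pmf (p : PMF A) : ∑ a, (p a).toReal = 1 := by
  rw [← ENNReal.toReal_sum fun a _ => p.apply_ne_top a, ← tsum_fintype (L := .unconditional A),
    p.tsum_coe, ENNReal.toReal_one]

theorem sub_le_mul_log_div {x y : ℝ} (hx : 0 ≤ x) (hy : 0 ≤ y) (hxy : y = 0 → x = 0) :
    x - y ≤ x * Real.log (x / y) := by
  rcases hx.eq_or_lt with rfl | hx
  · simpa using hy
  have hy : 0 < y := hy.lt_of_ne fun h => hx.ne' (hxy h.symm)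
  have h := mul_le_mul_of_nonneg_left (Real.one_sub_inv_le_log_of_pos (div_pos hx hy)) hx.le
  rwa [inv_div, mul_sub, mul_one, mul_div_cancel₀ _ hx.ne'] at h

/-- Mutual information is nonnegative. -/
theorem mutualInfo_nonneg (p : PMF A) (k : A → PMF B) : 0 ≤ mutualInfo p k := by
  have hsum : ∑ a, ∑ b, (jointP p k a b - (p a).toReal * margSnd p k b) = 0 := by
    simp only [Finset.sum_sub_distrib]
    rw [← Finset.sum_mul_sum, sum_toReal_pmf, one_mul, Finset.sum_comm]
    simp [margSnd]
  rw [← hsum]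
  refine Finset.sum_le_sum fun a _ => Finset.sum_le_sum fun b _ => sub_le_mul_log_div
    (jointP_nonneg p k a b) (mul_nonneg ENNReal.toReal_nonneg (margSnd_nonneg p k b)) fun h => ?_
  rcases mul_eq_zero.1 h with h | h
  · exact jointP_eq_zero_of_source k b h
  · exact le_antisymm (h ▸ jointP_le_margSnd p k a b) (jointP_nonneg p k a b)

theorem rate_le_mutualInfo {p : PMF A} {k : A → PMF B} {d : A → B → ℝ} {D : ℝ}
    (hk : expDist p k d ≤ D) : rate p d D ≤ mutualInfo p k :=
  csInf_le ⟨0, by rintro _ ⟨k, -, rfl⟩; exact mutualInfo_nonneg p k⟩ ⟨k, hk, rfl⟩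

/-- Two-term log-sum inequality, strict form. -/
theorem log_sum_lt {p x₁ x₂ q₁ q₂ : ℝ} (hp : 0 < p) (hx₁ : 0 ≤ x₁) (hx₂ : 0 ≤ x₂)
    (hq₁ : 0 < q₁) (hq₂ : 0 < q₂) (hne : x₁ / q₁ ≠ x₂ / q₂) :
    (x₁ + x₂) * Real.log ((x₁ + x₂) / (p * (q₁ + q₂))) <
      x₁ * Real.log (x₁ / (p * q₁)) + x₂ * Real.log (x₂ / (p * q₂)) := by
  have hq : 0 < q₁ + q₂ := add_pos hq₁ hq₂
  have hne' : x₁ / (p * q₁) ≠ x₂ / (p * q₂) := by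
    rw [mul_comm p, mul_comm p, ← div_div, ← div_div]
    exact fun h => hne ((div_left_inj' hp.ne').1 h)
  have h := Real.strictConvexOn_mul_log.2
    (Set.mem_Ici.2 (by positivity : 0 ≤ x₁ / (p * q₁)))
    (Set.mem_Ici.2 (by positivity : 0 ≤ x₂ / (p * q₂))) hne'
    (by positivity : 0 < q₁ / (q₁ + q₂)) (by positivity : 0 < q₂ / (q₁ + q₂)) (by field_simp)
  simp only [smul_eq_mul] at h
  have hmean : q₁ / (q₁ + q₂) * (x₁ / (p * q₁)) + q₂ / (q₁ + q₂) * (x₂ / (p * q₂)) =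
      (x₁ + x₂) / (p * (q₁ + q₂)) := by field_simp
  rw [hmean] at h
  have h := mul_lt_mul_of_pos_left h (mul_pos hp hq)
  generalize Real.log ((x₁ + x₂) / (p * (q₁ + q₂))) = l at h ⊢
  generalize Real.log (x₁ / (p * q₁)) = l₁ at h ⊢
  generalize Real.log (x₂ / (p * q₂)) = l₂ at h ⊢
  calc (x₁ + x₂) * l = p * (q₁ + q₂) * ((x₁ + x₂) / (p * (q₁ + q₂)) * l) := by field_simp
    _ < _ := h
    _ = x₁ * l₁ + x₂ * l₂ := by field_simp

/-- Two-term log-sum inequality. -/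
theorem log_sum_le {p x₁ x₂ q₁ q₂ : ℝ} (hp : 0 < p) (hx₁ : 0 ≤ x₁) (hx₂ : 0 ≤ x₂)
    (hq₁ : 0 < q₁) (hq₂ : 0 < q₂) :
    (x₁ + x₂) * Real.log ((x₁ + x₂) / (p * (q₁ + q₂))) ≤
      x₁ * Real.log (x₁ / (p * q₁)) + x₂ * Real.log (x₂ / (p * q₂)) := by
  by_cases hne : x₁ / q₁ = x₂ / q₂
  · have hx : x₁ = x₂ / q₂ * q₁ := by rw [← hne]; field_simp
    have h₁ : x₁ / (p * q₁) = x₂ / (p * q₂) := by rw [hx]; field_simp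
    have h₂ : (x₁ + x₂) / (p * (q₁ + q₂)) = x₂ / (p * q₂) := by rw [hx]; field_simp
    rw [h₁, h₂, add_mul]
  · exact (log_sum_lt hp hx₁ hx₂ hq₁ hq₂ hne).le

open Classical in
/-- The channel obtained from `k` by replacing the output `b₂` with `b₁`. -/
noncomputable def mergeChannel (k : A → PMF B) (b₁ b₂ : B) : A → PMF B :=
  fun a => (k a).map (Function.update id b₂ b₁)

open Classical in
theorem jointP_mergeChannel (p : PMF A) (k : A → PMF B) (b₁ b₂ : B) (a : A) (b : B) :
    jointP p (mergeChannel k b₁ b₂) a b = jointP p k a b +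
      ((if b = b₁ then jointP p k a b₂ else 0) - (if b = b₂ then jointP p k a b₂ else 0)) := by
  have hmap : jointP p (mergeChannel k b₁ b₂) a b =
      ∑ c, if b = Function.update id b₂ b₁ c then jointP p k a c else 0 := by
    simp only [jointP, mergeChannel, PMF.map_apply, tsum_fintype, ENNReal.toReal_mul]
    rw [ENNReal.toReal_sum fun c _ => by split_ifs <;> simp [PMF.apply_ne_top], Finset.mul_sum]
    refine Finset.sum_congr rfl fun c _ => ?_
    split_ifs <;> simp
  have hterm : ∀ c, (if b = Function.update id b₂ b₁ c then jointP p k a c else 0) =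
      (if c = b then jointP p k a b else 0) + (if c = b₂ then
        (if b = b₁ then jointP p k a b₂ else 0) - (if b = b₂ then jointP p k a b₂ else 0)
        else 0) := by
    intro c
    by_cases hc : c = b₂
    · subst hc
      by_cases hb : b = c
      · subst hb; simp
      · simp [hb, Ne.symm hb]
    · by_cases hb : b = c
      · subst hb; simp [hc]
      · simp [hc, hb, Ne.symm hb]
  rw [hmap, Finset.sum_congr rfl fun c _ => hterm c, Finset.sum_add_distrib]
  simp

open Classical in
theorem margSnd_mergeChannel (p : PMF A) (k : A → PMF B) (b₁ b₂ b : B) :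
    margSnd p (mergeChannel k b₁ b₂) b = margSnd p k b +
      ((if b = b₁ then margSnd p k b₂ else 0) - (if b = b₂ then margSnd p k b₂ else 0)) := by
  simp only [margSnd, jointP_mergeChannel, Finset.sum_add_distrib, Finset.sum_sub_distrib]
  split_ifs <;> simp

/-- Merging outputs that a distortion does not distinguish preserves expected distortion. -/
theorem expDist_mergeChannel (p : PMF A) (k : A → PMF B) {b₁ b₂ : B} {d : A → B → ℝ}
    (hd : ∀ a, d a b₁ = d a b₂) : expDist p (mergeChannel k b₁ b₂) d = expDist p k d := by
  classical
  refine Finset.sum_congr rfl fun a _ => ?_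
  simp only [jointP_mergeChannel, add_mul, sub_mul, ite_mul, zero_mul, Finset.sum_add_distrib,
    Finset.sum_sub_distrib]
  simp [hd]

/-- Merging two outputs with different posteriors strictly decreases mutual information. -/
theorem mutualInfo_mergeChannel_lt {p : PMF A} {k : A → PMF B} {b₁ b₂ : B} (hne : b₁ ≠ b₂)
    (h₁ : 0 < margSnd p k b₁) (h₂ : 0 < margSnd p k b₂) {a₀ : A}
    (hpost : condProb p k a₀ b₁ ≠ condProb p k a₀ b₂) :
    mutualInfo p (mergeChannel k b₁ b₂) < mutualInfo p k := by
  classical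
  set F : A → B → ℝ := fun a b =>
    jointP p k a b * Real.log (jointP p k a b / ((p a).toReal * margSnd p k b))
  set G : A → B → ℝ := fun a b =>
    jointP p (mergeChannel k b₁ b₂) a b * Real.log (jointP p (mergeChannel k b₁ b₂) a b /
      ((p a).toReal * margSnd p (mergeChannel k b₁ b₂) b)) with hG
  have hG₁ : ∀ a, G a b₁ = (jointP p k a b₁ + jointP p k a b₂) *
      Real.log ((jointP p k a b₁ + jointP p k a b₂) /
        ((p a).toReal * (margSnd p k b₁ + margSnd p k b₂))) := by
    intro a
    simp [hG, jointP_mergeChannel, margSnd_mergeChannel, hne]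
  have hle₁ : ∀ a, G a b₁ ≤ F a b₁ + F a b₂ := by
    intro a
    rw [hG₁]
    rcases (ENNReal.toReal_nonneg (a := p a)).eq_or_lt with ha | ha
    · simp [F, jointP_eq_zero_of_source k _ ha.symm]
    · exact log_sum_le ha (jointP_nonneg ..) (jointP_nonneg ..) h₁ h₂
  have hlt₁ : G a₀ b₁ < F a₀ b₁ + F a₀ b₂ := by
    rw [hG₁]
    refine log_sum_lt (ENNReal.toReal_nonneg.lt_of_ne fun ha => hpost ?_) (jointP_nonneg ..)
      (jointP_nonneg ..) h₁ h₂ hpost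
    simp [condProb, jointP_eq_zero_of_source k _ ha.symm]
  have hsplit : ∀ a, ∑ b, G a b = ∑ b, F a b + (G a b₁ - (F a b₁ + F a b₂)) := by
    intro a
    have hterm : ∀ b, G a b = F a b + ((if b = b₁ then G a b₁ - F a b₁ else 0) -
        (if b = b₂ then F a b₂ else 0)) := by
      intro b
      by_cases hb₁ : b = b₁
      · subst hb₁; simp [hne]
      · by_cases hb₂ : b = b₂
        · subst hb₂; simp [hG, jointP_mergeChannel, hb₁]
        · simp [hG, F, jointP_mergeChannel, margSnd_mergeChannel, hb₁, hb₂]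
    rw [Finset.sum_congr rfl fun b _ => hterm b, Finset.sum_add_distrib, Finset.sum_sub_distrib]
    simp
    ring
  refine Finset.sum_lt_sum (fun a _ => ?_) ⟨a₀, Finset.mem_univ a₀, ?_⟩
  · linarith [hsplit a, hle₁ a]
  · linarith [hsplit a₀, hlt₁]

end Merge

/-- If some Y-optimal channel attains D_T^min = min 𝒟*_T(D_Y;Y), and every
Y-optimal channel attaining D_T^min has two distinct reconstruction points of positive
marginal probability with identical task output but differing posteriors, then
R_Y(D_T^min;T) < R_Y(D_Y;Y). Here Y = g(X). -/
theorem supervised_lt_intermediate_rd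
    {𝒳 𝒴 𝒯 : Type*} [Fintype 𝒳] [Fintype 𝒴] [Fintype 𝒯]
    [Nonempty 𝒳] [Nonempty 𝒴] [Nonempty 𝒯]
    (pX : PMF 𝒳) (g : 𝒳 → 𝒴) (h : 𝒴 → 𝒯)
    (dT : 𝒯 → 𝒯 → ℝ) (hdT : ∀ t t', 0 ≤ dT t t')
    (dY : 𝒴 → 𝒴 → ℝ) (hdY : ∀ y y', 0 ≤ dY y y')
    (DY : ℝ) (hDY : 0 < DY)
    (kstar : 𝒴 → PMF 𝒴)
    (hk_dist : expDist (pX.map g) kstar dY ≤ DY)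
    (hk_rate : mutualInfo (pX.map g) kstar = rate (pX.map g) dY DY)
    (DTmin : ℝ)
    (hattain : DTmin = expDist (pX.map g) kstar (fun y yhat => dT (h y) (h yhat)))
    (hmin : ∀ k : 𝒴 → PMF 𝒴, expDist (pX.map g) k dY ≤ DY →
      mutualInfo (pX.map g) k = rate (pX.map g) dY DY →
      DTmin ≤ expDist (pX.map g) k (fun y yhat => dT (h y) (h yhat)))
    (hmerge : ∀ k : 𝒴 → PMF 𝒴, expDist (pX.map g) k dY ≤ DY →
      mutualInfo (pX.map g) k = rate (pX.map g) dY DY →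
      expDist (pX.map g) k (fun y yhat => dT (h y) (h yhat)) = DTmin →
      ∃ yhat₁ yhat₂ : 𝒴, yhat₁ ≠ yhat₂ ∧
        0 < margSnd (pX.map g) k yhat₁ ∧ 0 < margSnd (pX.map g) k yhat₂ ∧
        h yhat₁ = h yhat₂ ∧
        ∃ y : 𝒴, condProb (pX.map g) k y yhat₁ ≠ condProb (pX.map g) k y yhat₂) :
    rate (pX.map g) (fun y yhat => dT (h y) (h yhat)) DTmin
      < rate (pX.map g) dY DY := by
  obtain ⟨y₁, y₂, hne, h₁, h₂, hh, y, hpost⟩ := hmerge kstar hk_dist hk_rate hattain.symm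
  rw [← hk_rate]
  refine (rate_le_mutualInfo ?_).trans_lt (mutualInfo_mergeChannel_lt hne h₁ h₂ hpost)
  rw [hattain]
  exact (expDist_mergeChannel _ _ fun a => by rw [hh]).le
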